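/- (Theorem 2 of the paper, second-order derivative of the eigenvalue cost.) Suppose the three eigenvalues λ₁ > λ₂ > λ₃ of A are pairwise distinct, with orthonormal eigenvectors u₁, u₂, u₃ forming the orthogonal matrix U = [u₁ u₂ u₃]. Define, for m, n ∈ {1,2,3} and each j ∈ {1,…,N}, the row vectors F^{p_j}_{m,n} = ((p_j − p̄)ᵀ/(N(λ_n − λ_m)))·(u_m u_nᵀ + u_n u_mᵀ) if m ≠ n, and F^{p_j}_{m,n} = 0 if m = n, and let F^{p_j}_k ∈ ℝ^{3×3} be the matrix whose m-th row is F^{p_j}_{m,k}. Then the second partial derivative of λ_k with respect to the points satisfies: ∂²λ_k/(∂p_j ∂p_i) = (2/N)·( ((N−1)/N)·u_k u_kᵀ + u_k (p_i − p̄)ᵀ U F^{p_j}_k + U F^{p_j}_k · (u_kᵀ(p_i − p̄)) ) when i = j, and ∂²λ_k/(∂p_j ∂p_i) = (2/N)·( −(1/N)·u_k u_kᵀ + u_k (p_i − p̄)ᵀ U F^{p_j}_k + U F^{p_j}_k · (u_kᵀ(p_i − p̄)) ) when i ≠ j. -/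

import Mathlib

open Matrix Finset

/-- The covariance matrix `A(p₁, …, p_N) = (1/N) ∑ᵢ (pᵢ - p̄)(pᵢ - p̄)ᵀ` of a
configuration of `N` points in `ℝ³`, where `p̄ = (1/N) ∑ᵢ pᵢ`. -/
noncomputable def covMatrix (N : ℕ) (p : Fin N → Fin 3 → ℝ) :
    Matrix (Fin 3) (Fin 3) ℝ :=
  (N : ℝ)⁻¹ • ∑ i, Matrix.vecMulVec (p i - (N : ℝ)⁻¹ • ∑ j, p j)
    (p i - (N : ℝ)⁻¹ • ∑ j, p j)

theorem onb_expand (u : Fin 3 → Fin 3 → ℝ)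
    (horth : ∀ a b : Fin 3, u a ⬝ᵥ u b = if a = b then 1 else 0) (x w : Fin 3 → ℝ) :
    x ⬝ᵥ w = ∑ m, (u m ⬝ᵥ x) * (u m ⬝ᵥ w) := by
  have h1 : (Matrix.of u) * (Matrix.of u)ᵀ = 1 := by
    ext a b
    simpa [Matrix.mul_apply, dotProduct, Matrix.one_apply] using horth a b
  have h2 : (Matrix.of u)ᵀ * (Matrix.of u) = 1 := mul_eq_one_comm.mp h1
  have h3 : ((Matrix.of u) *ᵥ x) ⬝ᵥ ((Matrix.of u) *ᵥ w) = x ⬝ᵥ w := by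
    rw [Matrix.dotProduct_mulVec, Matrix.vecMul_mulVec, h2, Matrix.vecMul_one]
  rw [← h3]
  rfl

theorem onb_zero (u : Fin 3 → Fin 3 → ℝ)
    (horth : ∀ a b : Fin 3, u a ⬝ᵥ u b = if a = b then 1 else 0) (w : Fin 3 → ℝ)
    (h : ∀ m, u m ⬝ᵥ w = 0) : w = 0 := by
  have := onb_expand u horth w w
  simp only [h, mul_zero, Finset.sum_const_zero] at this
  exact dotProduct_self_eq_zero.mp this

theorem exists_branch {E : Type*} [NormedAddCommGroup E] [NormedSpace ℝ E] [CompleteSpace E]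
    (a : E → Matrix (Fin 3) (Fin 3) ℝ) (ha : ∀ r c, ContDiff ℝ 2 (fun q => a q r c))
    (p : E) (hsym : (a p)ᵀ = a p)
    (lam : Fin 3 → ℝ) (u : Fin 3 → Fin 3 → ℝ)
    (horth : ∀ a b : Fin 3, u a ⬝ᵥ u b = if a = b then 1 else 0)
    (heig : ∀ m : Fin 3, a p *ᵥ u m = lam m • u m)
    (k : Fin 3) (hne : ∀ m, m ≠ k → lam m ≠ lam k) :
    ∃ (Λ : E → ℝ) (v : E → Fin 3 → ℝ), Λ p = lam k ∧ v p = u k ∧ ContDiffAt ℝ 2 Λ p ∧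
      ContDiffAt ℝ 2 v p ∧ ∀ᶠ q in nhds p, (a q *ᵥ v q = Λ q • v q ∧ u k ⬝ᵥ v q = 1) := by
  let f : E × ((Fin 3 → ℝ) × ℝ) → (Fin 3 → ℝ) × ℝ := fun z =>
    (fun r => (∑ c, a z.1 r c * z.2.1 c) - z.2.2 * z.2.1 r, ∑ r, u k r * z.2.1 r)
  let z0 : E × ((Fin 3 → ℝ) × ℝ) := (p, (u k, lam k))
  have hf0 : f z0 = (0, 1) := by
    refine Prod.ext ?_ ?_
    · funext r
      have := congrFun (heig k) r
      simp only [mulVec, dotProduct, Pi.smul_apply, smul_eq_mul] at this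
      simp [f, z0, this]
    · have := horth k k
      simpa [dotProduct] using this
  have hcoord : ∀ r : Fin 3, ContDiff ℝ 2 (fun z : E × ((Fin 3 → ℝ) × ℝ) => z.2.1 r) := by
    intro r; fun_prop
  have cdf : ContDiff ℝ 2 f := by
    refine ContDiff.prodMk ?_ ?_
    · rw [contDiff_pi]
      intro r
      refine ContDiff.sub (ContDiff.sum fun c _ => ContDiff.mul ?_ (hcoord c)) (ContDiff.mul ?_ (hcoord r))
      · exact (ha r c).comp contDiff_fst
      · fun_prop
    · exact ContDiff.sum fun c _ => contDiff_const.mul (hcoord c)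
  have hdf : ∀ (w : Fin 3 → ℝ) (ν : ℝ), (fderiv ℝ f z0 ∘L .inr ℝ E ((Fin 3 → ℝ) × ℝ)) (w, ν) =
      (a p *ᵥ w - lam k • w - ν • u k, u k ⬝ᵥ w) := by
    intro w ν
    have h1 : HasFDerivAt f (fderiv ℝ f z0) z0 := (cdf.differentiable (by norm_num) z0).hasFDerivAt
    have hl : HasDerivAt (fun t : ℝ => ((p, (u k, lam k) + t • (w, ν)) : E × ((Fin 3 → ℝ) × ℝ)))
        ((0 : E), (w, ν)) 0 := by
      refine HasDerivAt.prodMk (hasDerivAt_const _ _) ?_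
      simpa using ((hasDerivAt_id (0:ℝ)).smul_const (w, ν)).const_add (u k, lam k)
    have h2 := HasFDerivAt.comp_hasDerivAt (x := (0:ℝ)) (f := fun t : ℝ => ((p, (u k, lam k) + t • (w, ν)) : E × ((Fin 3 → ℝ) × ℝ)))
      (l := f) (l' := fderiv ℝ f z0) (by simpa [z0] using h1) hl
    have h3 : HasDerivAt (f ∘ fun t : ℝ => ((p, (u k, lam k) + t • (w, ν)) : E × ((Fin 3 → ℝ) × ℝ)))
        (a p *ᵥ w - lam k • w - ν • u k, u k ⬝ᵥ w) 0 := by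
      have hc : ∀ c, HasDerivAt (fun t : ℝ => u k c + t * w c) (w c) 0 := fun c => by
        simpa using ((hasDerivAt_id (0:ℝ)).mul_const (w c)).const_add (u k c)
      have hn : HasDerivAt (fun t : ℝ => lam k + t * ν) ν 0 := by
        simpa using ((hasDerivAt_id (0:ℝ)).mul_const ν).const_add (lam k)
      refine HasDerivAt.prodMk ?_ ?_
      · rw [hasDerivAt_pi]
        intro r
        have := (HasDerivAt.fun_sum (u := Finset.univ) fun c _ => (hc c).const_mul (a p r c)).sub (hn.mul (hc r))
        refine this.congr_deriv ?_
        simp [mulVec, dotProduct]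
        ring
      · exact (HasDerivAt.fun_sum (u := Finset.univ) fun c _ => (hc c).const_mul (u k c))
    have := h2.unique h3
    simpa using this
  have hinj : Function.Injective (fderiv ℝ f z0 ∘L .inr ℝ E ((Fin 3 → ℝ) × ℝ)) := by
    rw [injective_iff_map_eq_zero]
    rintro ⟨w, ν⟩ h
    rw [hdf] at h
    obtain ⟨h1, h2⟩ := Prod.ext_iff.mp h
    simp only [Prod.fst_zero, Prod.snd_zero] at h1 h2
    have key : ∀ m, lam m * (u m ⬝ᵥ w) - lam k * (u m ⬝ᵥ w) - ν * (u m ⬝ᵥ u k) = 0 := by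
      intro m
      have := congrArg (fun x => u m ⬝ᵥ x) h1
      simp only [dotProduct_sub, dotProduct_smul, dotProduct_zero, smul_eq_mul] at this
      rw [Matrix.dotProduct_mulVec, ← Matrix.mulVec_transpose, hsym, heig, smul_dotProduct] at this
      simpa using this
    have hν : ν = 0 := by
      have := key k
      rw [horth k k] at this
      simpa using this
    have hw : w = 0 := by
      apply onb_zero u horth
      intro m
      by_cases hm : m = k
      · rw [hm, h2]
      · have := key m
        rw [hν] at this
        have h3 : (lam m - lam k) * (u m ⬝ᵥ w) = 0 := by linarith
        exact (mul_eq_zero.mp h3).resolve_left (sub_ne_zero.mpr (hne m hm))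
    rw [hν, hw]; rfl
  have hinv : (fderiv ℝ f z0 ∘L .inr ℝ E ((Fin 3 → ℝ) × ℝ)).IsInvertible := by
    refine ⟨(LinearEquiv.ofInjectiveEndo (fderiv ℝ f z0 ∘L .inr ℝ E ((Fin 3 → ℝ) × ℝ)).toLinearMap hinj).toContinuousLinearEquiv, ?_⟩
    ext x <;> rfl
  have cd0 := cdf.contDiffAt (x := z0)
  let ψ := cd0.implicitFunction (by norm_num) hinv
  have hψ : ContDiffAt ℝ 2 ψ p := cd0.contDiffAt_implicitFunction (by norm_num) hinv
  have hψe : ∀ᶠ q in nhds p, f (q, ψ q) = f z0 := cd0.eventually_apply_implicitFunction (by norm_num) hinv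
  have hψp : ψ p = (u k, lam k) :=
    (cd0.eventually_apply_eq_iff_implicitFunction (by norm_num) hinv).self_of_nhds.mp rfl
  refine ⟨fun q => (ψ q).2, fun q => (ψ q).1, congrArg Prod.snd hψp, congrArg Prod.fst hψp, hψ.snd, hψ.fst, ?_⟩
  filter_upwards [hψe] with q hq
  rw [hf0] at hq
  obtain ⟨h1, h2⟩ := Prod.ext_iff.mp hq
  refine ⟨?_, h2⟩
  funext r
  have := congrFun h1 r
  simp only [f, Pi.zero_apply] at this
  simp only [mulVec, dotProduct, Pi.smul_apply, smul_eq_mul]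
  linarith

theorem eig_first_order {E : Type*} [NormedAddCommGroup E] [NormedSpace ℝ E]
    (a : E → Matrix (Fin 3) (Fin 3) ℝ) (B : Fin 3 → Fin 3 → E →L[ℝ] E →L[ℝ] ℝ)
    (hB : ∀ r c q, HasFDerivAt (fun q => a q r c) (B r c q) q)
    (Λ : E → ℝ) (v : E → Fin 3 → ℝ) (q : E) (hΛ : DifferentiableAt ℝ Λ q)
    (hv : DifferentiableAt ℝ v q) (he : ∀ᶠ q in nhds q, a q *ᵥ v q = Λ q • v q) (ε : E) :
    (Matrix.of fun r c => B r c q ε) *ᵥ v q + a q *ᵥ (fderiv ℝ v q ε) =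
      fderiv ℝ Λ q ε • v q + Λ q • fderiv ℝ v q ε := by
  funext r
  have hvc : ∀ c, HasFDerivAt (fun q => v q c) ((ContinuousLinearMap.proj c).comp (fderiv ℝ v q)) q :=
    fun c => (hasFDerivAt_pi'.mp hv.hasFDerivAt) c
  have h1 := HasFDerivAt.fun_sum (u := Finset.univ) fun c _ => (hB r c q).mul (hvc c)
  have h2 := hΛ.hasFDerivAt.mul (hvc r)
  have h3 : (fun q => ∑ c, a q r c * v q c) =ᶠ[nhds q] (fun q => Λ q * v q r) := by
    filter_upwards [he] with q hq
    exact congrFun hq r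
  have h4 := congrArg (fun L => L ε) ((h1.congr_of_eventuallyEq h3.symm).unique h2)
  simp only [_root_.sum_apply, _root_.add_apply, _root_.smul_apply,
    ContinuousLinearMap.comp_apply, ContinuousLinearMap.proj_apply, smul_eq_mul, Finset.sum_add_distrib] at h4
  simp only [mulVec, dotProduct, Pi.add_apply, Pi.smul_apply, smul_eq_mul, Matrix.of_apply]
  simp only [mul_comm (v q _)] at h4
  linarith

theorem eig_second_order {E : Type*} [NormedAddCommGroup E] [NormedSpace ℝ E]
    (a : E → Matrix (Fin 3) (Fin 3) ℝ) (hsym : ∀ q, (a q)ᵀ = a q)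
    (B : Fin 3 → Fin 3 → E →L[ℝ] E →L[ℝ] ℝ)
    (hB : ∀ r c q, HasFDerivAt (fun q => a q r c) (B r c q) q)
    (hBs : ∀ r c, B r c = B c r) (p : E)
    (lam : Fin 3 → ℝ) (u : Fin 3 → Fin 3 → ℝ)
    (horth : ∀ a b : Fin 3, u a ⬝ᵥ u b = if a = b then 1 else 0)
    (heig : ∀ m : Fin 3, a p *ᵥ u m = lam m • u m)
    (k : Fin 3) (hne : ∀ m, m ≠ k → lam m ≠ lam k)
    (Λ : E → ℝ) (v : E → Fin 3 → ℝ) (hΛp : Λ p = lam k) (hvp : v p = u k)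
    (hΛ : ContDiffAt ℝ 2 Λ p) (hv : ContDiffAt ℝ 2 v p)
    (he : ∀ᶠ q in nhds p, (a q *ᵥ v q = Λ q • v q ∧ u k ⬝ᵥ v q = 1)) (δ ε : E) :
    iteratedFDeriv ℝ 2 Λ p ![δ, ε] =
      u k ⬝ᵥ ((Matrix.of fun r c => B r c δ ε) *ᵥ u k) +
      2 * ∑ m, if m = k then 0 else (lam k - lam m)⁻¹ *
        (u m ⬝ᵥ ((Matrix.of fun r c => B r c p δ) *ᵥ u k)) *
        (u m ⬝ᵥ ((Matrix.of fun r c => B r c p ε) *ᵥ u k)) := by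
  have hswap : ∀ (M : Matrix (Fin 3) (Fin 3) ℝ), Mᵀ = M → ∀ x y, x ⬝ᵥ (M *ᵥ y) = (M *ᵥ x) ⬝ᵥ y := by
    intro M hM x y
    rw [Matrix.dotProduct_mulVec, ← Matrix.mulVec_transpose, hM]
  have hBsym : ∀ x y, (Matrix.of fun r c => B r c x y)ᵀ = (Matrix.of fun r c => B r c x y) := by
    intro x y; ext r c; simp [hBs r c]
  have hΛd : ∀ᶠ q in nhds p, DifferentiableAt ℝ Λ q := by
    filter_upwards [hΛ.eventually (by norm_num)] with q hq using hq.differentiableAt (by norm_num)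
  have hvd : ∀ᶠ q in nhds p, DifferentiableAt ℝ v q := by
    filter_upwards [hv.eventually (by norm_num)] with q hq using hq.differentiableAt (by norm_num)
  -- Hellmann–Feynman
  have hHF : ∀ᶠ q in nhds p, (∑ r, v q r * v q r) * fderiv ℝ Λ q ε =
      ∑ r, ∑ c, v q r * v q c * B r c q ε := by
    filter_upwards [hΛd, hvd, he.eventually_nhds] with q h1 h2 h3
    have h := eig_first_order a B hB Λ v q h1 h2 (h3.mono fun _ h => h.1) ε
    have h' := congrArg (fun x => v q ⬝ᵥ x) h
    simp only [dotProduct_add, dotProduct_smul, smul_eq_mul] at h'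
    rw [hswap (a q) (hsym q), h3.self_of_nhds.1, smul_dotProduct, smul_eq_mul] at h'
    have h4 : v q ⬝ᵥ ((Matrix.of fun r c => B r c q ε) *ᵥ v q) = fderiv ℝ Λ q ε * (v q ⬝ᵥ v q) := by
      linarith
    have h5 : (∑ r, v q r * v q r) = v q ⬝ᵥ v q := rfl
    rw [h5, mul_comm, ← h4]
    simp only [dotProduct, mulVec, Finset.mul_sum, Matrix.of_apply]
    refine Finset.sum_congr rfl fun r _ => Finset.sum_congr rfl fun c _ => by ring
  -- derivative of the eigenvector
  set w := fderiv ℝ v p δ with hw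
  have hvc : ∀ c, HasFDerivAt (fun q => v q c) ((ContinuousLinearMap.proj c).comp (fderiv ℝ v p)) p :=
    fun c => (hasFDerivAt_pi'.mp hvd.self_of_nhds.hasFDerivAt) c
  have hkw : u k ⬝ᵥ w = 0 := by
    have h1 := HasFDerivAt.fun_sum (u := Finset.univ) fun c _ => (hvc c).const_mul (u k c)
    have h2 : (fun q => ∑ c, u k c * v q c) =ᶠ[nhds p] (fun _ => (1:ℝ)) := by
      filter_upwards [he] with q hq using hq.2
    have h4 := congrArg (fun L => L δ) ((h1.congr_of_eventuallyEq h2.symm).unique (hasFDerivAt_const _ _))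
    simpa [dotProduct] using h4
  have hmw : ∀ m, m ≠ k → u m ⬝ᵥ w = (lam k - lam m)⁻¹ *
      (u m ⬝ᵥ ((Matrix.of fun r c => B r c p δ) *ᵥ u k)) := by
    intro m hm
    have h := eig_first_order a B hB Λ v p hΛd.self_of_nhds hvd.self_of_nhds (he.mono fun _ h => h.1) δ
    rw [← hw, hvp, hΛp] at h
    have h' := congrArg (fun x => u m ⬝ᵥ x) h
    simp only [dotProduct_add, dotProduct_smul, smul_eq_mul] at h'
    rw [hswap (a p) (hsym p), heig, smul_dotProduct, smul_eq_mul, horth, if_neg hm] at h'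
    have hne' : lam k - lam m ≠ 0 := sub_ne_zero.mpr (hne m hm).symm
    rw [eq_inv_mul_iff_mul_eq₀ hne']
    linarith
  -- differentiate Hellmann–Feynman
  have hdd : HasFDerivAt (fun q => fderiv ℝ Λ q ε) ((fderiv ℝ (fderiv ℝ Λ) p).flip ε) p := by
    have : DifferentiableAt ℝ (fderiv ℝ Λ) p :=
      (hΛ.fderiv_right (m := 1) (by norm_num)).differentiableAt (by norm_num)
    have h := this.hasFDerivAt.clm_apply (hasFDerivAt_const ε p)
    refine h.congr_fderiv ?_
    ext x; simp
  have hBd : ∀ r c, HasFDerivAt (fun q => B r c q ε) ((B r c).flip ε) p := by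
    intro r c
    have h := ((B r c).flip ε).hasFDerivAt (x := p)
    exact h
  have hL := (HasFDerivAt.fun_sum (u := Finset.univ) fun c _ => (hvc c).mul (hvc c)).mul hdd
  have hR := (HasFDerivAt.fun_sum (u := Finset.univ) fun r _ =>
    (HasFDerivAt.fun_sum (u := Finset.univ) fun c _ => ((hvc r).mul (hvc c)).mul (hBd r c)))
  have hE := congrArg (fun L => L δ) ((hL.congr_of_eventuallyEq (Filter.EventuallyEq.symm hHF)).unique hR)
  have huu : ∑ c, u k c * u k c = 1 := by simpa [dotProduct] using horth k k
  simp only [_root_.sum_apply, _root_.add_apply, _root_.smul_apply,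
    ContinuousLinearMap.comp_apply, ContinuousLinearMap.proj_apply, smul_eq_mul, Finset.sum_add_distrib,
    ContinuousLinearMap.flip_apply, ← hw, hvp, Pi.mul_apply, huu, one_mul] at hE
  have hkw' : ∑ c, u k c * w c = 0 := hkw
  rw [hkw'] at hE
  rw [iteratedFDeriv_two_apply]
  simp only [Matrix.cons_val_zero, Matrix.cons_val_one]
  have hterm : w ⬝ᵥ ((Matrix.of fun r c => B r c p ε) *ᵥ u k) =
      ∑ m, if m = k then 0 else (lam k - lam m)⁻¹ *
        (u m ⬝ᵥ ((Matrix.of fun r c => B r c p δ) *ᵥ u k)) *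
        (u m ⬝ᵥ ((Matrix.of fun r c => B r c p ε) *ᵥ u k)) := by
    rw [onb_expand u horth]
    refine Finset.sum_congr rfl fun m _ => ?_
    by_cases hm : m = k
    · rw [if_pos hm, hm, hkw, zero_mul]
    · rw [if_neg hm, hmw m hm]
  have hterm' : u k ⬝ᵥ ((Matrix.of fun r c => B r c p ε) *ᵥ w) =
      w ⬝ᵥ ((Matrix.of fun r c => B r c p ε) *ᵥ u k) := by
    rw [hswap _ (hBsym p ε), dotProduct_comm]
  rw [← hterm]
  have e1 : w ⬝ᵥ ((Matrix.of fun r c => B r c p ε) *ᵥ u k) = ∑ r, ∑ c, w r * u k c * B r c p ε := by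
    simp only [dotProduct, mulVec, Finset.mul_sum, Matrix.of_apply]
    exact Finset.sum_congr rfl fun r _ => Finset.sum_congr rfl fun c _ => by ring
  have e2 : u k ⬝ᵥ ((Matrix.of fun r c => B r c p ε) *ᵥ w) = ∑ r, ∑ c, u k r * w c * B r c p ε := by
    simp only [dotProduct, mulVec, Finset.mul_sum, Matrix.of_apply]
    exact Finset.sum_congr rfl fun r _ => Finset.sum_congr rfl fun c _ => by ring
  have e3 : u k ⬝ᵥ ((Matrix.of fun r c => B r c δ ε) *ᵥ u k) = ∑ r, ∑ c, u k r * u k c * B r c δ ε := by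
    simp only [dotProduct, mulVec, Finset.mul_sum, Matrix.of_apply]
    exact Finset.sum_congr rfl fun r _ => Finset.sum_congr rfl fun c _ => by ring
  rw [two_mul]
  nth_rewrite 2 [← hterm']
  rw [e1, e2, e3]
  simp only [Fin.sum_univ_three] at hE ⊢
  linarith

noncomputable def covL (N : ℕ) (i : Fin N) : (Fin N → Fin 3 → ℝ) →L[ℝ] (Fin 3 → ℝ) :=
  ContinuousLinearMap.proj i - (N : ℝ)⁻¹ • ∑ j, ContinuousLinearMap.proj j

theorem covL_apply (N : ℕ) (i : Fin N) (q : Fin N → Fin 3 → ℝ) :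
    covL N i q = q i - (N : ℝ)⁻¹ • ∑ j, q j := by
  simp [covL]

noncomputable def covLr (N : ℕ) (i : Fin N) (r : Fin 3) : (Fin N → Fin 3 → ℝ) →L[ℝ] ℝ :=
  (ContinuousLinearMap.proj r).comp (covL N i)

theorem covLr_apply (N : ℕ) (i : Fin N) (r : Fin 3) (q : Fin N → Fin 3 → ℝ) :
    covLr N i r q = covL N i q r := rfl

noncomputable def covB (N : ℕ) (r c : Fin 3) :
    (Fin N → Fin 3 → ℝ) →L[ℝ] (Fin N → Fin 3 → ℝ) →L[ℝ] ℝ :=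
  (N : ℝ)⁻¹ • ∑ i, ((covLr N i r).smulRight (covLr N i c) + (covLr N i c).smulRight (covLr N i r))

theorem covB_apply (N : ℕ) (r c : Fin 3) (x y : Fin N → Fin 3 → ℝ) :
    covB N r c x y = (N : ℝ)⁻¹ * ∑ i, (covL N i x r * covL N i y c + covL N i x c * covL N i y r) := by
  simp [covB, covLr_apply]

theorem covMatrix_apply (N : ℕ) (q : Fin N → Fin 3 → ℝ) (r c : Fin 3) :
    covMatrix N q r c = (N : ℝ)⁻¹ * ∑ i, covLr N i r q * covLr N i c q := by
  simp only [covMatrix, covLr_apply, covL_apply, Matrix.smul_apply, Matrix.sum_apply,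
    Matrix.vecMulVec_apply, smul_eq_mul]

theorem covB_hasFDerivAt (N : ℕ) (r c : Fin 3) (q : Fin N → Fin 3 → ℝ) :
    HasFDerivAt (fun q => covMatrix N q r c) (covB N r c q) q := by
  simp only [covMatrix_apply]
  have h := (HasFDerivAt.fun_sum (u := Finset.univ) fun i _ =>
    ((covLr N i r).hasFDerivAt (x := q)).mul ((covLr N i c).hasFDerivAt (x := q))).const_mul (N : ℝ)⁻¹
  refine h.congr_fderiv ?_
  ext x
  simp [covB]

theorem covB_quad (N : ℕ) (x y : Fin N → Fin 3 → ℝ) (s t : Fin 3 → ℝ) :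
    s ⬝ᵥ ((Matrix.of fun r c => covB N r c x y) *ᵥ t) =
      (N : ℝ)⁻¹ * ∑ i, ((s ⬝ᵥ covL N i x) * (t ⬝ᵥ covL N i y) + (s ⬝ᵥ covL N i y) * (t ⬝ᵥ covL N i x)) := by
  simp only [dotProduct, mulVec, Matrix.of_apply, covB_apply, Fin.sum_univ_three, Finset.mul_sum,
    Finset.sum_mul, ← Finset.sum_add_distrib]
  refine Finset.sum_congr rfl fun i _ => ?_
  ring

theorem covL_sum (N : ℕ) (hN : 1 ≤ N) (x : Fin N → Fin 3 → ℝ) : ∑ i, covL N i x = 0 := by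
  have h : (N : ℝ) ≠ 0 := by positivity
  simp only [covL_apply, Finset.sum_sub_distrib, Finset.sum_const, Finset.card_univ, Fintype.card_fin]
  rw [← Nat.cast_smul_eq_nsmul ℝ, smul_smul, mul_inv_cancel₀ h, one_smul, sub_self]

theorem covL_sum_mul (N : ℕ) (hN : 1 ≤ N) (x y : Fin N → Fin 3 → ℝ) (s t : Fin 3 → ℝ) :
    ∑ i, (s ⬝ᵥ covL N i x) * (t ⬝ᵥ covL N i y) = ∑ i, (s ⬝ᵥ covL N i x) * (t ⬝ᵥ y i) := by
  have h : ∑ i, s ⬝ᵥ covL N i x = 0 := by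
    rw [← dotProduct_sum, covL_sum N hN, dotProduct_zero]
  have h2 : ∀ i, (s ⬝ᵥ covL N i x) * (t ⬝ᵥ covL N i y) =
      (s ⬝ᵥ covL N i x) * (t ⬝ᵥ y i) - (s ⬝ᵥ covL N i x) * (t ⬝ᵥ ((N : ℝ)⁻¹ • ∑ j, y j)) := by
    intro i
    rw [covL_apply N i y, dotProduct_sub]; ring
  simp only [h2, Finset.sum_sub_distrib, ← Finset.sum_mul, h, zero_mul, sub_zero]

/-- Theorem 2 of the paper: with pairwise distinct eigenvalues
`λ₁ > λ₂ > λ₃` of `A` (orthonormal eigenvectors `u₁, u₂, u₃`, eigenvector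
matrix `U = [u₁ u₂ u₃]`), and with `F^{pⱼ}_{m,n} = ((pⱼ - p̄)ᵀ/(N(λₙ - λₘ)))
(uₘuₙᵀ + uₙuₘᵀ)` for `m ≠ n`, `0` for `m = n`, and `F^{pⱼ}ₖ` the 3×3 matrix
with `m`-th row `F^{pⱼ}_{m,k}`, the eigenvalue function `λₖ` of the points
(a local eigenvalue selection `Λ` with `Λ p = λₖ`) is twice differentiable at
the configuration, and the `(i,j)` block of its Hessian equals
`(2/N)(((N-1)/N)·uₖuₖᵀ + uₖ(pᵢ-p̄)ᵀ U F^{pⱼ}ₖ + U F^{pⱼ}ₖ·(uₖᵀ(pᵢ-p̄)))` when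
`i = j`, and
`(2/N)(-(1/N)·uₖuₖᵀ + uₖ(pᵢ-p̄)ᵀ U F^{pⱼ}ₖ + U F^{pⱼ}ₖ·(uₖᵀ(pᵢ-p̄)))` when
`i ≠ j`. -/
theorem eigenvalue_second_derivative
    (N : ℕ) (hN : 1 ≤ N) (p : Fin N → Fin 3 → ℝ)
    (pbar : Fin 3 → ℝ) (hpbar : pbar = (N : ℝ)⁻¹ • ∑ i, p i)
    (lam : Fin 3 → ℝ) (u : Fin 3 → Fin 3 → ℝ)
    (horth : ∀ a b : Fin 3, u a ⬝ᵥ u b = if a = b then 1 else 0)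
    (heig : ∀ a : Fin 3, covMatrix N p *ᵥ u a = lam a • u a)
    (hord : ∀ a b : Fin 3, a < b → lam b < lam a)
    (k : Fin 3)
    (U : Matrix (Fin 3) (Fin 3) ℝ) (hU : U = Matrix.of fun r c => u c r)
    (F : Fin N → Matrix (Fin 3) (Fin 3) ℝ)
    (hF : ∀ j : Fin N, F j = Matrix.of fun m c =>
      if m = k then 0
      else ((N : ℝ) * (lam k - lam m))⁻¹ *
        (((p j - pbar) ᵥ* (vecMulVec (u m) (u k) + vecMulVec (u k) (u m))) c))
    (H : Fin N → Fin N → Matrix (Fin 3) (Fin 3) ℝ)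
    (hH : ∀ i j : Fin N, H i j = (2 / (N : ℝ)) •
      ((if i = j then ((N : ℝ) - 1) / (N : ℝ) else -(1 / (N : ℝ))) •
          vecMulVec (u k) (u k)
        + vecMulVec (u k) (p i - pbar) * (U * F j)
        + (u k ⬝ᵥ (p i - pbar)) • (U * F j))) :
    ∃ Λ : (Fin N → Fin 3 → ℝ) → ℝ,
      Λ p = lam k ∧
      (∀ᶠ q in nhds p, ∃ v : Fin 3 → ℝ, v ≠ 0 ∧ covMatrix N q *ᵥ v = Λ q • v) ∧
      ContDiffAt ℝ 2 Λ p ∧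
      ∀ δ ε : Fin N → Fin 3 → ℝ,
        iteratedFDeriv ℝ 2 Λ p ![δ, ε] = ∑ i, ∑ j, δ i ⬝ᵥ (H i j *ᵥ ε j) := by
  have hN0 : (N : ℝ) ≠ 0 := by positivity
  have hne : ∀ m, m ≠ k → lam m ≠ lam k := by
    intro m hm
    rcases lt_or_gt_of_ne hm with h | h
    · exact (hord _ _ h).ne'
    · exact (hord _ _ h).ne
  have hsym : ∀ q, (covMatrix N q)ᵀ = covMatrix N q := by
    intro q; ext r c
    simp only [Matrix.transpose_apply, covMatrix_apply, mul_comm]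
  have hcd : ∀ r c, ContDiff ℝ 2 (fun q => covMatrix N q r c) := by
    intro r c
    simp only [covMatrix_apply]
    exact contDiff_const.mul (ContDiff.sum fun i _ => (covLr N i r).contDiff.mul (covLr N i c).contDiff)
  have hBs : ∀ r c, covB N r c = covB N c r := by
    intro r c
    refine ContinuousLinearMap.ext fun x => ContinuousLinearMap.ext fun y => ?_
    rw [covB_apply, covB_apply]
    congr 1
    exact Finset.sum_congr rfl fun i _ => add_comm _ _
  obtain ⟨Λ, v, hΛp, hvp, hΛ, hv, he⟩ :=
    exists_branch (covMatrix N) hcd p (hsym p) lam u horth heig k hne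
  refine ⟨Λ, hΛp, ?_, hΛ, ?_⟩
  · filter_upwards [he] with q hq
    refine ⟨v q, ?_, hq.1⟩
    intro h0
    have := hq.2
    rw [h0, dotProduct_zero] at this
    exact zero_ne_one this
  intro δ ε
  rw [eig_second_order (covMatrix N) hsym (covB N) (fun r c q => covB_hasFDerivAt N r c q) hBs p lam u
    horth heig k hne Λ v hΛp hvp hΛ hv he δ ε]
  have hD : ∀ i, covL N i p = p i - pbar := by
    intro i; rw [covL_apply, hpbar]
  have hG : ∀ m x, u m ⬝ᵥ ((Matrix.of fun r c => covB N r c p x) *ᵥ u k) =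
      (N : ℝ)⁻¹ * ∑ i, ((u m ⬝ᵥ (p i - pbar)) * (u k ⬝ᵥ x i) + (u k ⬝ᵥ (p i - pbar)) * (u m ⬝ᵥ x i)) := by
    intro m x
    rw [covB_quad, Finset.sum_add_distrib, Finset.sum_add_distrib, covL_sum_mul N hN]
    simp only [mul_comm (u m ⬝ᵥ covL N _ x)]
    rw [covL_sum_mul N hN]
    simp only [hD]
  have hQ : u k ⬝ᵥ ((Matrix.of fun r c => covB N r c δ ε) *ᵥ u k) =
      ∑ i, ∑ j, (2 / (N : ℝ)) * ((if i = j then ((N : ℝ) - 1) / (N : ℝ) else -(1 / (N : ℝ))) *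
        ((u k ⬝ᵥ δ i) * (u k ⬝ᵥ ε j))) := by
    rw [covB_quad]
    have h1 : ∀ i, (u k ⬝ᵥ covL N i δ) * (u k ⬝ᵥ covL N i ε) + (u k ⬝ᵥ covL N i ε) * (u k ⬝ᵥ covL N i δ)
      = 2 * ((u k ⬝ᵥ covL N i ε) * (u k ⬝ᵥ covL N i δ)) := by intro i; ring
    simp only [h1]
    rw [← Finset.mul_sum, covL_sum_mul N hN, Finset.mul_sum, Finset.mul_sum]
    refine Finset.sum_congr rfl fun i _ => ?_
    rw [covL_apply, dotProduct_sub, dotProduct_smul, dotProduct_sum, smul_eq_mul]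
    have h2 : ∀ j, (2 / (N : ℝ)) * ((if i = j then ((N : ℝ) - 1) / (N : ℝ) else -(1 / (N : ℝ))) *
        ((u k ⬝ᵥ δ i) * (u k ⬝ᵥ ε j))) = (if i = j then (2 / (N : ℝ)) * ((u k ⬝ᵥ δ i) * (u k ⬝ᵥ ε j)) else 0)
        - (2 / (N : ℝ)) * (N : ℝ)⁻¹ * (u k ⬝ᵥ δ i) * (u k ⬝ᵥ ε j) := by
      intro j
      split_ifs
      · field_simp
      · field_simp; ring
    simp only [h2, Finset.sum_sub_distrib, Finset.sum_ite_eq, Finset.mem_univ, if_true, ← Finset.mul_sum]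
    ring
  have hFe : ∀ j m, (F j *ᵥ ε j) m = if m = k then 0 else ((N : ℝ) * (lam k - lam m))⁻¹ *
      ((u m ⬝ᵥ (p j - pbar)) * (u k ⬝ᵥ ε j) + (u k ⬝ᵥ (p j - pbar)) * (u m ⬝ᵥ ε j)) := by
    intro j m
    rw [hF j]
    by_cases hm : m = k
    · simp [hm, mulVec, dotProduct]
    · simp only [hm, mulVec, dotProduct, vecMul, Matrix.of_apply, if_false, Fin.sum_univ_three,
        Matrix.add_apply, Matrix.vecMulVec_apply]
      ring
  have hUF : ∀ j z, z ⬝ᵥ ((U * F j) *ᵥ ε j) = ∑ m, (u m ⬝ᵥ z) * (F j *ᵥ ε j) m := by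
    intro j z
    rw [← Matrix.mulVec_mulVec, Matrix.dotProduct_mulVec, hU]
    simp only [dotProduct, vecMul, Matrix.of_apply, mul_comm]
  have hHe : ∀ i j, δ i ⬝ᵥ (H i j *ᵥ ε j) =
      (2 / (N : ℝ)) * ((if i = j then ((N : ℝ) - 1) / (N : ℝ) else -(1 / (N : ℝ))) *
        ((u k ⬝ᵥ δ i) * (u k ⬝ᵥ ε j))) +
      ∑ m, (2 / (N : ℝ)) * (((u m ⬝ᵥ (p i - pbar)) * (u k ⬝ᵥ δ i) + (u k ⬝ᵥ (p i - pbar)) * (u m ⬝ᵥ δ i)) *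
        (F j *ᵥ ε j) m) := by
    intro i j
    rw [hH i j, Matrix.smul_mulVec, Matrix.add_mulVec, Matrix.add_mulVec, Matrix.smul_mulVec,
      Matrix.smul_mulVec, ← Matrix.mulVec_mulVec]
    simp only [dotProduct_smul, dotProduct_add, smul_eq_mul, Matrix.vecMulVec_mulVec, hUF,
      op_smul_eq_smul]
    rw [dotProduct_comm (δ i) (u k)]
    simp only [Fin.sum_univ_three]
    ring
  simp only [hHe, Finset.sum_add_distrib, ← hQ]
  congr 1
  have hcomm : ∀ f : Fin N → Fin N → Fin 3 → ℝ, ∑ i, ∑ j, ∑ m, f i j m = ∑ m, ∑ i, ∑ j, f i j m := by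
    intro f
    rw [Finset.sum_comm]
    rw [Finset.sum_comm]
    rw [Finset.sum_congr rfl fun i _ => Finset.sum_comm]
    exact Finset.sum_comm
  rw [hcomm, Finset.mul_sum]
  refine Finset.sum_congr rfl fun m _ => ?_
  simp only [hG, hFe]
  by_cases hm : m = k
  · simp [hm]
  · simp only [if_neg hm]
    have hne' : lam k - lam m ≠ 0 := sub_ne_zero.mpr (hne m hm).symm
    simp only [← Finset.mul_sum, ← Finset.sum_mul]
    field_simp
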